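/- Let d, D be positive integers, let Ω ⊆ ℝ^d be an open bounded set, U ⊆ ℝ^D open, and let L : Ω → U, g : U → ℝ^D, M : [0,∞) × U → ℝ^D and R : ℝ^D → ℝ^d be maps. Assume: (H1) (fiber contraction) there exist constants C₀ > 0, K > 0 such that ‖M(t, u) − M(t, g(u))‖ ≤ C₀ e^{−K t} for all t ≥ 0 and all u ∈ L(Ω); (H2) R is Lipschitz with constant C_R; (H3) (uniform transversality) there exist c > 0 and T > 0 such that for every t ∈ [0, T] the map A_t : Ω → ℝ^d, A_t(x) = R(M(t, g(L(x)))), satisfies the lower Lipschitz bound ‖A_t(x) − A_t(x')‖ ≥ c ‖x − x'‖ for all x, x' ∈ Ω. Then for all t_skip ≥ 0 and δ ≥ 0 with t_skip + δ ≤ T, and all x ∈ Ω, any y ∈ Ω satisfying the implicit coarse time-stepper equation R(M(t_skip, L(y))) = R(M(t_skip + δ, L(x))) and any y* ∈ Ω satisfying the exact slow-flow equation R(M(t_skip, g(L(y*)))) = R(M(t_skip + δ, g(L(x)))) obey the estimate ‖y − y*‖ ≤ (2 C_R C₀ / c) e^{−K t_skip}. -/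

import Mathlib

/-!
The exact slow-flow step is the implicit time step of the same microscopic flow for the lifting
`g ∘ L` instead of `L`. The two liftings give trajectories that, once restricted, differ at time `t`
by at most `C_R C₀ e^{-K t}`, so both sides of the defining equation, taken at the times `t_skip`
and `t_skip + δ`, are perturbed by at most `C_R C₀ e^{-K t_skip}`. Transversality bounds the
distance between the two solutions by `1 / c` times the sum of these perturbations.
-/

open Set
open scoped NNReal

section ImplicitStep

variable {τ X Z : Type*} {F G : τ → X → Z} {s δ : τ} {x y y' : X}

/-- `y` is a value at `x` of the implicit macroscopic time stepper with healing time `s` and step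
length `δ`, where `F t x` is the restriction at time `t` of the microscopic trajectory lifted from
`x`. A relation rather than a function, since the equation need not be uniquely solvable. -/
def IsImplicitStep [Add τ] (F : τ → X → Z) (s δ : τ) (x y : X) : Prop :=
  F s y = F (s + δ) x

variable [PseudoMetricSpace Z]

theorem IsImplicitStep.dist_le_add [Add τ] (hy : IsImplicitStep F s δ x y)
    (hy' : IsImplicitStep G s δ x y') :
    dist (G s y) (G s y') ≤ dist (F s y) (G s y) + dist (F (s + δ) x) (G (s + δ) x) := by
  unfold IsImplicitStep at hy hy'
  calc
    dist (G s y) (G s y') ≤ dist (G s y) (F s y) + dist (F s y) (G s y') := dist_triangle _ _ _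
    _ = dist (F s y) (G s y) + dist (F (s + δ) x) (G (s + δ) x) := by
      rw [dist_comm (G s y), hy, hy']

theorem IsImplicitStep.dist_le_of_antitoneOn [AddZeroClass τ] [Preorder τ] [AddLeftMono τ]
    [PseudoMetricSpace X] {Ω : Set X} {ρ : τ → ℝ} {c : ℝ}
    (hρ : AntitoneOn ρ (Ici 0))
    (hFG : ∀ t, 0 ≤ t → ∀ x ∈ Ω, dist (F t x) (G t x) ≤ ρ t)
    (hc : 0 < c) (hG : ∀ y ∈ Ω, ∀ y' ∈ Ω, c * dist y y' ≤ dist (G s y) (G s y'))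
    (hs : 0 ≤ s) (hδ : 0 ≤ δ) (hxΩ : x ∈ Ω) (hyΩ : y ∈ Ω) (hyΩ' : y' ∈ Ω)
    (hy : IsImplicitStep F s δ x y) (hy' : IsImplicitStep G s δ x y') :
    dist y y' ≤ 2 * ρ s / c := by
  have hsδ : 0 ≤ s + δ := add_nonneg hs hδ
  have hρs : ρ (s + δ) ≤ ρ s := hρ hs hsδ (le_add_of_nonneg_right hδ)
  rw [le_div_iff₀' hc]
  calc
    c * dist y y' ≤ dist (G s y) (G s y') := hG y hyΩ y' hyΩ'
    _ ≤ dist (F s y) (G s y) + dist (F (s + δ) x) (G (s + δ) x) := hy.dist_le_add hy'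
    _ ≤ ρ s + ρ (s + δ) := add_le_add (hFG s hs y hyΩ) (hFG (s + δ) hsδ x hxΩ)
    _ ≤ 2 * ρ s := by linarith

end ImplicitStep

theorem antitone_mul_exp_neg_mul {C K : ℝ} (hC : 0 ≤ C) (hK : 0 ≤ K) :
    Antitone fun t : ℝ => C * Real.exp (-K * t) := by
  intro t t' htt'
  have hexponent : -K * t' ≤ -K * t := mul_le_mul_of_nonpos_left htt' (neg_nonpos.mpr hK)
  dsimp only
  gcongr

theorem implicit_time_stepper_convergence_general
    {X Y Z : Type*} [PseudoMetricSpace X] [PseudoMetricSpace Y] [PseudoMetricSpace Z]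
    {Ω : Set X} {L L' : X → Y} {M : ℝ → Y → Y} {R : Y → Z} {C₀ K c s δ : ℝ} {CR : ℝ≥0}
    {x y y' : X} (hK : 0 ≤ K)
    (hM : ∀ t, 0 ≤ t → ∀ x ∈ Ω, dist (M t (L x)) (M t (L' x)) ≤ C₀ * Real.exp (-K * t))
    (hR : LipschitzWith CR R) (hc : 0 < c)
    (hA : ∀ y ∈ Ω, ∀ y' ∈ Ω, c * dist y y' ≤ dist (R (M s (L' y))) (R (M s (L' y'))))
    (hs : 0 ≤ s) (hδ : 0 ≤ δ) (hxΩ : x ∈ Ω) (hyΩ : y ∈ Ω) (hyΩ' : y' ∈ Ω)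
    (hy : IsImplicitStep (fun t x => R (M t (L x))) s δ x y)
    (hy' : IsImplicitStep (fun t x => R (M t (L' x))) s δ x y') :
    dist y y' ≤ (2 * CR * C₀ / c) * Real.exp (-K * s) := by
  have hC₀ : 0 ≤ C₀ :=
    nonneg_of_mul_nonneg_left (dist_nonneg.trans (hM 0 le_rfl x hxΩ)) (Real.exp_pos _)
  have hantitone := antitone_mul_exp_neg_mul (mul_nonneg CR.coe_nonneg hC₀) hK
  have hrestricted : ∀ t, 0 ≤ t → ∀ x ∈ Ω,
      dist (R (M t (L x))) (R (M t (L' x))) ≤ CR * C₀ * Real.exp (-K * t) := fun t ht x hx =>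
    (hR.dist_le_mul_of_le (hM t ht x hx)).trans_eq (mul_assoc _ _ _).symm
  calc
    dist y y' ≤ 2 * (CR * C₀ * Real.exp (-K * s)) / c :=
      hy.dist_le_of_antitoneOn (ρ := fun t => CR * C₀ * Real.exp (-K * t))
        (hantitone.antitoneOn _) hrestricted hc hA hs hδ hxΩ hyΩ hyΩ' hy'
    _ = (2 * CR * C₀ / c) * Real.exp (-K * s) := by ring

/-- Convergence of the implicitly defined coarse-level time stepper (value case):
under fiber contraction (H1), Lipschitz restriction (H2), and uniform lower
Lipschitz bound for the healed coarse map (H3), any solution `y` of the implicit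
time-stepper equation is within `(2 C_R C₀ / c) e^{-K t_skip}` of the exact
slow-flow solution `y*`. -/
theorem implicit_time_stepper_convergence
    (d D : ℕ) (hd : 0 < d) (hD : 0 < D)
    (Ω : Set (EuclideanSpace ℝ (Fin d))) (hΩopen : IsOpen Ω)
    (hΩbdd : Bornology.IsBounded Ω)
    (U : Set (EuclideanSpace ℝ (Fin D))) (hUopen : IsOpen U)
    (L : EuclideanSpace ℝ (Fin d) → EuclideanSpace ℝ (Fin D))
    (hLU : ∀ x ∈ Ω, L x ∈ U)
    (g : EuclideanSpace ℝ (Fin D) → EuclideanSpace ℝ (Fin D))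
    (M : ℝ → EuclideanSpace ℝ (Fin D) → EuclideanSpace ℝ (Fin D))
    (R : EuclideanSpace ℝ (Fin D) → EuclideanSpace ℝ (Fin d))
    (C₀ K : ℝ) (hC₀ : 0 < C₀) (hK : 0 < K)
    (H1 : ∀ t : ℝ, 0 ≤ t → ∀ x ∈ Ω,
      ‖M t (L x) - M t (g (L x))‖ ≤ C₀ * Real.exp (-K * t))
    (CR : ℝ) (hCR : 0 ≤ CR)
    (H2 : ∀ u v : EuclideanSpace ℝ (Fin D), ‖R u - R v‖ ≤ CR * ‖u - v‖)
    (c T : ℝ) (hc : 0 < c) (hT : 0 < T)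
    (H3 : ∀ t ∈ Set.Icc (0 : ℝ) T, ∀ x ∈ Ω, ∀ x' ∈ Ω,
      c * ‖x - x'‖ ≤ ‖R (M t (g (L x))) - R (M t (g (L x')))‖)
    (tskip δ : ℝ) (htskip : 0 ≤ tskip) (hδ : 0 ≤ δ) (hTsum : tskip + δ ≤ T)
    (x : EuclideanSpace ℝ (Fin d)) (hx : x ∈ Ω)
    (y : EuclideanSpace ℝ (Fin d)) (hy : y ∈ Ω)
    (hyeq : R (M tskip (L y)) = R (M (tskip + δ) (L x)))
    (ystar : EuclideanSpace ℝ (Fin d)) (hystar : ystar ∈ Ω)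
    (hystareq : R (M tskip (g (L ystar))) = R (M (tskip + δ) (g (L x)))) :
    ‖y - ystar‖ ≤ (2 * CR * C₀ / c) * Real.exp (-K * tskip) := by
  lift CR to ℝ≥0 using hCR
  simp only [← dist_eq_norm] at H1 H2 H3 ⊢
  exact implicit_time_stepper_convergence_general hK.le H1 (.of_dist_le_mul H2) hc
    (H3 tskip ⟨htskip, by linarith⟩) htskip hδ hx hy hystar hyeq hystareq
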